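/- Let M > 0 and let f : ℝ² → ℂ be the restriction to ℝ² of an entire function F : ℂ² → ℂ satisfying |F(z₁, z₂)| ≤ M·exp(√((Im z₁)² + (Im z₂)²)) for all (z₁, z₂) ∈ ℂ². For y ∈ ℝ define a_{jk}(y) = (f(jπ, y) − f(kπ, y))/(jπ − kπ) for j ≠ k and a_{jj}(y) = ∂f/∂x (jπ, y). Then for every y ∈ ℝ and all x₁, x₂ ∈ ℝ with x₁ ≠ x₂, x₁ ∉ πℤ and x₂ ∉ πℤ, the family (sin(x₁ − jπ)/(x₁ − jπ))·(sin(x₂ − kπ)/(x₂ − kπ))·a_{jk}(y) indexed by (j, k) ∈ ℤ² is absolutely summable and (f(x₁, y) − f(x₂, y))/(x₁ − x₂) = Σ_{(j,k)∈ℤ²} (sin(x₁ − jπ)/(x₁ − jπ))·(sin(x₂ − kπ)/(x₂ − kπ))·a_{jk}(y). -/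

import Mathlib

/-!
For an entire `g` with `‖g z‖ ≤ M exp |Im z|`, the divided difference `u ↦ dslope g w u` is entire,
and the maximum principle on the unit disc around `w` shows that it is
`O(exp |Im u| / (1 + |u|))`.

A function `h` with this growth is the sum of its cardinal series `∑ j, sinc (z - j π) h(j π)`:
dividing the difference of `h` and the `N`-th partial sum by `sin` leaves a holomorphic function on
the square of half-side `(N + 1/2) π`, which is uniformly small on the boundary and hence inside.

Applying this in each of the two variables of the divided difference gives an iterated sum. It may
be rearranged because the `(j, k)` term is `O(1 / ((1 + |j|) (1 + |k|) (1 + |j - k|)))`, which AM-GM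
dominates by a sum of three products of one-dimensional summable families.
-/

open Filter Topology Set Complex
open scoped Real

/-! ### Lattice sums -/

theorem one_add_norm_le_mul_one_add_norm_sub {V : Type*} [SeminormedAddCommGroup V] (a b : V) :
    1 + ‖a‖ ≤ (1 + ‖b‖) * (1 + ‖a - b‖) := by
  have triangle : ‖a‖ ≤ ‖b‖ + ‖a - b‖ := norm_le_norm_add_norm_sub' a b
  have := mul_nonneg (norm_nonneg b) (norm_nonneg (a - b))
  linarith

theorem summable_one_add_abs_int_rpow {b : ℝ} (hb : 1 < b) :
    Summable fun j : ℤ => (1 + |(j : ℝ)|) ^ (-b) := by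
  refine (Real.summable_abs_int_rpow hb).of_norm_bounded_eventually ?_
  filter_upwards [(finite_singleton (0 : ℤ)).compl_mem_cofinite] with j hj
  have hj_pos : 0 < |(j : ℝ)| := by simpa using hj
  rw [Real.norm_of_nonneg (by positivity)]
  exact Real.rpow_le_rpow_of_nonpos hj_pos (by linarith) (by linarith)

theorem mul_mul_le_add_pow_three {a b c : ℝ} (ha : 0 ≤ a) (hb : 0 ≤ b) (hc : 0 ≤ c) :
    a * b * c ≤ a ^ 3 + b ^ 3 + c ^ 3 := by
  have factorization : a ^ 3 + b ^ 3 + c ^ 3 - 3 * (a * b * c) =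
      (a + b + c) * ((a - b) ^ 2 + (b - c) ^ 2 + (c - a) ^ 2) / 2 := by ring
  have : 0 ≤ (a + b + c) * ((a - b) ^ 2 + (b - c) ^ 2 + (c - a) ^ 2) / 2 := by positivity
  have : 0 ≤ a * b * c := by positivity
  linarith [factorization]

theorem summable_sq_mul_sq_mul_sq_sub {v : ℤ → ℝ} (hv_nonneg : ∀ j, 0 ≤ v j)
    (hv : Summable fun j => v j ^ 3) :
    Summable fun p : ℤ × ℤ => v p.1 ^ 2 * v p.2 ^ 2 * v (p.1 - p.2) ^ 2 := by
  have hprod : Summable fun p : ℤ × ℤ => v p.1 ^ 3 * v p.2 ^ 3 :=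
    hv.mul_of_nonneg hv (fun j => pow_nonneg (hv_nonneg j) 3) fun j => pow_nonneg (hv_nonneg j) 3
  have hfst : Summable fun p : ℤ × ℤ => v p.1 ^ 3 * v (p.1 - p.2) ^ 3 :=
    hprod.comp_injective (i := fun p : ℤ × ℤ => (p.1, p.1 - p.2)) fun p q h => by
      simp only [Prod.mk.injEq] at h; ext <;> lia
  have hsnd : Summable fun p : ℤ × ℤ => v p.2 ^ 3 * v (p.1 - p.2) ^ 3 :=
    hprod.comp_injective (i := fun p : ℤ × ℤ => (p.2, p.1 - p.2)) fun p q h => by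
      simp only [Prod.mk.injEq] at h; ext <;> lia
  refine .of_nonneg_of_le (fun p => by positivity) (fun p => ?_) ((hprod.add hfst).add hsnd)
  have h₁ := hv_nonneg p.1
  have h₂ := hv_nonneg p.2
  have h₁₂ := hv_nonneg (p.1 - p.2)
  calc v p.1 ^ 2 * v p.2 ^ 2 * v (p.1 - p.2) ^ 2
      = v p.1 * v p.2 * (v p.1 * v (p.1 - p.2)) * (v p.2 * v (p.1 - p.2)) := by ring
    _ ≤ (v p.1 * v p.2) ^ 3 + (v p.1 * v (p.1 - p.2)) ^ 3 + (v p.2 * v (p.1 - p.2)) ^ 3 :=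
        mul_mul_le_add_pow_three (by positivity) (by positivity) (by positivity)
    _ = v p.1 ^ 3 * v p.2 ^ 3 + v p.1 ^ 3 * v (p.1 - p.2) ^ 3
          + v p.2 ^ 3 * v (p.1 - p.2) ^ 3 := by ring

theorem summable_inv_one_add_abs_mul_mul_sub :
    Summable fun p : ℤ × ℤ =>
      (1 + |(p.1 : ℝ)|)⁻¹ * (1 + |(p.2 : ℝ)|)⁻¹ * (1 + |((p.1 - p.2 : ℤ) : ℝ)|)⁻¹ := by
  have hpow : ∀ (j : ℤ) (n : ℕ),
      ((1 + |(j : ℝ)|) ^ (-(1 / 2) : ℝ)) ^ n = (1 + |(j : ℝ)|) ^ (-(n / 2) : ℝ) := fun j n => by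
    rw [← Real.rpow_mul_natCast (by positivity)]
    ring_nf
  refine (summable_sq_mul_sq_mul_sq_sub (v := fun j : ℤ => (1 + |(j : ℝ)|) ^ (-(1 / 2) : ℝ))
    (fun j => by positivity) ?_).congr fun p => ?_
  · simpa only [hpow] using summable_one_add_abs_int_rpow (b := (3 : ℕ) / 2) (by norm_num)
  · simp only [hpow, Nat.cast_ofNat, div_self (two_ne_zero' ℝ), Real.rpow_neg_one]

/-- The weight `∑_{|j| ≤ N} 1 / ((1 + |j|) (N + 1 - |j|))`, which controls the truncated cardinal
series on the boundary of the `N`-th sampling square. -/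
noncomputable def boundaryWeight (N : ℕ) : ℝ :=
  ∑ j ∈ Finset.Icc (-(N : ℤ)) N, ((1 + |(j : ℝ)|) * (N + 1 - |(j : ℝ)|))⁻¹

theorem abs_intCast_le_of_mem_Icc {N : ℕ} {j : ℤ} (hj : j ∈ Finset.Icc (-(N : ℤ)) N) :
    |(j : ℝ)| ≤ N := by
  exact_mod_cast abs_le.2 (Finset.mem_Icc.1 hj)

theorem sum_range_inv_mul_reflect (N : ℕ) :
    ∑ i ∈ Finset.range (N + 1), ((1 + (i : ℝ)) * (N + 1 - i))⁻¹ =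
      2 * ((N + 2 : ℝ)⁻¹ * ∑ i ∈ Finset.range (N + 1), 1 / ((i : ℝ) + 1)) := by
  have reflect := Finset.sum_range_reflect (fun i : ℕ => 1 / ((i : ℝ) + 1)) (N + 1)
  have partial_fractions : ∀ i ∈ Finset.range (N + 1), ((1 + (i : ℝ)) * (N + 1 - i))⁻¹ =
      (N + 2 : ℝ)⁻¹ * (1 / ((i : ℝ) + 1) + 1 / (((N + 1 - 1 - i : ℕ) : ℝ) + 1)) := fun i hi => by
    have hiN : i ≤ N := Finset.mem_range_succ_iff.1 hi
    have hiN' : (i : ℝ) ≤ N := mod_cast hiN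
    have : (N : ℝ) + 1 - i ≠ 0 := by linarith
    have : (N : ℝ) - i + 1 ≠ 0 := by linarith
    rw [Nat.add_sub_cancel, Nat.cast_sub hiN]
    field_simp
    ring
  rw [Finset.sum_congr rfl partial_fractions, ← Finset.mul_sum, Finset.sum_add_distrib, reflect]
  ring

theorem boundaryWeight_nonneg (N : ℕ) : 0 ≤ boundaryWeight N := by
  refine Finset.sum_nonneg fun j hj => ?_
  have : 0 ≤ (N : ℝ) + 1 - |(j : ℝ)| := by linarith [abs_intCast_le_of_mem_Icc hj]
  positivity

theorem boundaryWeight_le (N : ℕ) :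
    boundaryWeight N ≤
      4 * (((N + 1 : ℕ) : ℝ)⁻¹ * ∑ i ∈ Finset.range (N + 1), 1 / ((i : ℝ) + 1)) := by
  have fold : boundaryWeight N ≤
      2 * ∑ i ∈ Finset.range (N + 1), ((1 + (i : ℝ)) * (N + 1 - i))⁻¹ := by
    have center : 0 ≤ ((1 + |((0 : ℤ) : ℝ)|) * ((N : ℝ) + 1 - |((0 : ℤ) : ℝ)|))⁻¹ := by
      simp only [Int.cast_zero, abs_zero, sub_zero]
      positivity
    rw [boundaryWeight, Finset.sum_Icc_of_even_eq_range (fun j => by simp)]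
    simpa using center
  have harmonic_nonneg : 0 ≤ ∑ i ∈ Finset.range (N + 1), 1 / ((i : ℝ) + 1) :=
    Finset.sum_nonneg fun i _ => by positivity
  calc boundaryWeight N
      ≤ 4 * ((N + 2 : ℝ)⁻¹ * ∑ i ∈ Finset.range (N + 1), 1 / ((i : ℝ) + 1)) := by
        rw [sum_range_inv_mul_reflect] at fold
        linarith
    _ ≤ _ := by
        push_cast
        gcongr
        norm_num

theorem tendsto_boundaryWeight : Tendsto boundaryWeight atTop (𝓝 0) := by
  have cesaro := (tendsto_one_div_add_atTop_nhds_zero_nat (𝕜 := ℝ)).cesaro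
  refine squeeze_zero boundaryWeight_nonneg boundaryWeight_le ?_
  simpa using ((tendsto_add_atTop_iff_nat 1).2 cesaro).const_mul 4

/-! ### Quotients at simple zeros -/

section

variable {E : Type*} [NormedAddCommGroup E] [NormedSpace ℂ E]

/-- The quotient `f / s`, with the value given by l'Hôpital's rule at the zeros of `s`. When the
zeros of `s` are simple and are also zeros of `f`, this removes the singularities of `f / s`. -/
noncomputable def simpleZeroQuotient (s : ℂ → ℂ) (f : ℂ → E) (z : ℂ) : E :=
  open Classical in if s z = 0 then (deriv s z)⁻¹ • deriv f z else (s z)⁻¹ • f z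

theorem simpleZeroQuotient_of_ne {s : ℂ → ℂ} (f : ℂ → E) {z : ℂ} (hz : s z ≠ 0) :
    simpleZeroQuotient s f z = (s z)⁻¹ • f z :=
  if_neg hz

theorem simpleZeroQuotient_eventuallyEq_dslope {s : ℂ → ℂ} {f : ℂ → E} {c : ℂ}
    (hsc : s c = 0) (hfc : f c = 0) (hderiv : deriv s c ≠ 0) :
    simpleZeroQuotient s f =ᶠ[𝓝 c] fun z => (dslope s c z)⁻¹ • dslope f c z := by
  have hs_diff : DifferentiableAt ℂ s c := differentiableAt_of_deriv_ne_zero hderiv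
  have hne : ∀ᶠ z in 𝓝 c, dslope s c z ≠ 0 :=
    (continuousAt_dslope_same.2 hs_diff).eventually_ne (by rwa [dslope_same])
  filter_upwards [hne] with z hz
  rcases eq_or_ne z c with rfl | hzc
  · simp only [simpleZeroQuotient, hsc, if_true, dslope_same]
  · have hzc' : z - c ≠ 0 := sub_ne_zero.2 hzc
    have hs_factor := sub_smul_dslope_of_zero hsc z
    have hsz : s z ≠ 0 := by
      rw [← hs_factor]
      exact smul_ne_zero hzc' hz
    rw [simpleZeroQuotient_of_ne f hsz, ← hs_factor, ← sub_smul_dslope_of_zero hfc z, smul_eq_mul,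
      smul_smul, mul_inv_rev, inv_mul_cancel_right₀ hzc']

theorem simpleZeroQuotient_eventuallyEq_of_ne {s : ℂ → ℂ} (f : ℂ → E) {t : Set ℂ} {c : ℂ}
    (hs : ContinuousWithinAt s t c) (hsc : s c ≠ 0) :
    simpleZeroQuotient s f =ᶠ[𝓝[t] c] fun z => (s z)⁻¹ • f z := by
  filter_upwards [hs.eventually_ne hsc] with z hz using simpleZeroQuotient_of_ne f hz

variable [CompleteSpace E]

theorem differentiableOn_simpleZeroQuotient {s : ℂ → ℂ} {f : ℂ → E} {U : Set ℂ} (hU : IsOpen U)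
    (hs : DifferentiableOn ℂ s U) (hf : DifferentiableOn ℂ f U)
    (hzero : ∀ c ∈ U, s c = 0 → f c = 0 ∧ deriv s c ≠ 0) :
    DifferentiableOn ℂ (simpleZeroQuotient s f) U := by
  intro c hc
  have hUc : U ∈ 𝓝 c := hU.mem_nhds hc
  refine DifferentiableAt.differentiableWithinAt ?_
  by_cases hsc : s c = 0
  · obtain ⟨hfc, hderiv⟩ := hzero c hc hsc
    have hs' := ((differentiableOn_dslope hUc).2 hs).differentiableAt hUc
    have hf' := ((differentiableOn_dslope hUc).2 hf).differentiableAt hUc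
    exact ((hs'.inv (by rwa [dslope_same])).smul hf').congr_of_eventuallyEq
      (simpleZeroQuotient_eventuallyEq_dslope hsc hfc hderiv)
  · have hs' := hs.differentiableAt hUc
    have heq := simpleZeroQuotient_eventuallyEq_of_ne f
      (hs'.continuousAt.continuousWithinAt (s := univ)) hsc
    exact ((hs'.inv hsc).smul (hf.differentiableAt hUc)).congr_of_eventuallyEq
      (nhdsWithin_univ c ▸ heq)

theorem diffContOnCl_simpleZeroQuotient {s : ℂ → ℂ} {f : ℂ → E} {U : Set ℂ} (hU : IsOpen U)
    (hs : DiffContOnCl ℂ s U) (hf : DiffContOnCl ℂ f U)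
    (hzero : ∀ c ∈ U, s c = 0 → f c = 0 ∧ deriv s c ≠ 0) (hs_frontier : ∀ z ∈ frontier U, s z ≠ 0) :
    DiffContOnCl ℂ (simpleZeroQuotient s f) U := by
  have hdiff := differentiableOn_simpleZeroQuotient hU hs.1 hf.1 hzero
  refine ⟨hdiff, fun z hz => ?_⟩
  by_cases hzU : z ∈ U
  · exact (hdiff.differentiableAt (hU.mem_nhds hzU)).continuousAt.continuousWithinAt
  · have hsz : s z ≠ 0 := hs_frontier z (hU.frontier_eq ▸ ⟨hz, hzU⟩)
    exact (((hs.2 z hz).inv₀ hsz).smul (hf.2 z hz)).congr_of_eventuallyEq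
      (simpleZeroQuotient_eventuallyEq_of_ne f (hs.2 z hz) hsz) (simpleZeroQuotient_of_ne f hsz)

theorem norm_le_mul_norm_of_forall_mem_frontier {s : ℂ → ℂ} {f : ℂ → E} {U : Set ℂ} {B : ℝ}
    (hU : IsOpen U) (hU_bdd : Bornology.IsBounded U)
    (hs : DiffContOnCl ℂ s U) (hf : DiffContOnCl ℂ f U)
    (hzero : ∀ c ∈ U, s c = 0 → f c = 0 ∧ deriv s c ≠ 0) (hs_frontier : ∀ z ∈ frontier U, s z ≠ 0)
    (hB : ∀ z ∈ frontier U, ‖f z‖ ≤ B * ‖s z‖) {z : ℂ} (hz : z ∈ U) : ‖f z‖ ≤ B * ‖s z‖ := by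
  by_cases hsz : s z = 0
  · simp only [(hzero z hz hsz).1, hsz, norm_zero, mul_zero, le_refl]
  have quotient_norm : ∀ w, s w ≠ 0 → ‖simpleZeroQuotient s f w‖ = ‖f w‖ / ‖s w‖ := fun w hw => by
    rw [simpleZeroQuotient_of_ne f hw, norm_smul, norm_inv, inv_mul_eq_div]
  have quotient_le : ‖simpleZeroQuotient s f z‖ ≤ B := by
    refine norm_le_of_forall_mem_frontier_norm_le hU_bdd
      (diffContOnCl_simpleZeroQuotient hU hs hf hzero hs_frontier) (fun w hw => ?_)
      (subset_closure hz)
    rw [quotient_norm w (hs_frontier w hw)]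
    exact (div_le_iff₀ (norm_pos_iff.2 (hs_frontier w hw))).2 (hB w hw)
  rwa [quotient_norm z hsz, div_le_iff₀ (norm_pos_iff.2 hsz)] at quotient_le

end

/-! ### Divided differences -/

theorem dslope_comm {𝕜 V : Type*} [NontriviallyNormedField 𝕜] [NormedAddCommGroup V]
    [NormedSpace 𝕜 V] (f : 𝕜 → V) (a b : 𝕜) : dslope f a b = dslope f b a := by
  rcases eq_or_ne a b with rfl | hab
  · rfl
  · rw [dslope_of_ne f hab, dslope_of_ne f hab.symm, slope_comm]

theorem dslope_eq_sub_div_sub {𝕜 : Type*} [NontriviallyNormedField 𝕜] (f : 𝕜 → 𝕜) {a b : 𝕜}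
    (hab : a ≠ b) : dslope f a b = (f a - f b) / (a - b) := by
  rw [dslope_comm, dslope_of_ne f hab, slope_def_field]

theorem norm_dslope_eq_div {𝕜 V : Type*} [NontriviallyNormedField 𝕜] [NormedAddCommGroup V]
    [NormedSpace 𝕜 V] (f : 𝕜 → V) {a b : 𝕜} (hab : b ≠ a) :
    ‖dslope f a b‖ = ‖f b - f a‖ / ‖b - a‖ := by
  rw [dslope_of_ne f hab, slope_def_module, norm_smul, norm_inv, inv_mul_eq_div]

theorem nonneg_of_forall_norm_le_mul_exp {V : Type*} [SeminormedAddCommGroup V] {g : ℂ → V}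
    {M : ℝ} (hb : ∀ z, ‖g z‖ ≤ M * Real.exp |z.im|) : 0 ≤ M := by
  simpa using (norm_nonneg _).trans (hb 0)

section

variable {E : Type*} [NormedAddCommGroup E] [NormedSpace ℂ E] [CompleteSpace E]

theorem differentiable_dslope {g : ℂ → E} (hg : Differentiable ℂ g) (w : ℂ) :
    Differentiable ℂ (dslope g w) :=
  differentiableOn_univ.1 ((differentiableOn_dslope univ_mem).2 hg.differentiableOn)

theorem norm_dslope_le_of_norm_sub_lt_one {g : ℂ → E} {M : ℝ} (hg : Differentiable ℂ g)
    (hb : ∀ z, ‖g z‖ ≤ M * Real.exp |z.im|) {w z : ℂ} (hz : ‖z - w‖ < 1) :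
    ‖dslope g w z‖ ≤ 2 * M * Real.exp (1 + |w.im|) := by
  have hM := nonneg_of_forall_norm_le_mul_exp hb
  refine norm_le_of_forall_mem_frontier_norm_le (Metric.isBounded_ball (x := w) (r := 1))
    (differentiable_dslope hg w).diffContOnCl (fun u hu => ?_)
    (subset_closure (mem_ball_iff_norm.2 hz))
  have hu_norm : ‖u - w‖ = 1 := by
    rwa [frontier_ball w one_ne_zero, mem_sphere_iff_norm] at hu
  have hu_im : |u.im| ≤ 1 + |w.im| := by
    have := (abs_im_le_norm (u - w)).trans_eq hu_norm
    rw [sub_im] at this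
    linarith [abs_sub_abs_le_abs_sub u.im w.im]
  have hu_ne : u ≠ w := sub_ne_zero.1 (norm_ne_zero_iff.1 (hu_norm ▸ one_ne_zero))
  calc ‖dslope g w u‖ = ‖g u - g w‖ := by rw [norm_dslope_eq_div g hu_ne, hu_norm, div_one]
    _ ≤ ‖g u‖ + ‖g w‖ := norm_sub_le _ _
    _ ≤ M * Real.exp (1 + |w.im|) + M * Real.exp (1 + |w.im|) := by
        gcongr
        · exact (hb u).trans (by gcongr)
        · exact (hb w).trans (by gcongr; linarith)
    _ = 2 * M * Real.exp (1 + |w.im|) := by ring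

theorem norm_dslope_le_of_norm_le_exp {g : ℂ → E} {M : ℝ} (hg : Differentiable ℂ g)
    (hb : ∀ z, ‖g z‖ ≤ M * Real.exp |z.im|) (w z : ℂ) :
    ‖dslope g w z‖ ≤ 4 * M * Real.exp (1 + |w.im| + |z.im|) / (1 + ‖z - w‖) := by
  have hM := nonneg_of_forall_norm_le_mul_exp hb
  have hw_im := abs_nonneg w.im
  have hz_im := abs_nonneg z.im
  rw [le_div_iff₀ (by positivity)]
  rcases lt_or_ge ‖z - w‖ 1 with hnear | hfar
  · calc ‖dslope g w z‖ * (1 + ‖z - w‖) ≤ 2 * M * Real.exp (1 + |w.im| + |z.im|) * 2 := by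
          gcongr
          · refine (norm_dslope_le_of_norm_sub_lt_one hg hb hnear).trans ?_
            gcongr 2 * M * Real.exp ?_
            linarith
          · linarith
      _ = 4 * M * Real.exp (1 + |w.im| + |z.im|) := by ring
  · have hne : z ≠ w := sub_ne_zero.1 (norm_pos_iff.1 (one_pos.trans_le hfar))
    calc ‖dslope g w z‖ * (1 + ‖z - w‖) ≤ ‖dslope g w z‖ * (2 * ‖z - w‖) := by gcongr; linarith
      _ = 2 * ‖g z - g w‖ := by
          rw [norm_dslope_eq_div g hne]
          field_simp [norm_ne_zero_iff.2 (sub_ne_zero.2 hne)]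
      _ ≤ 2 * (‖g z‖ + ‖g w‖) := by gcongr; exact norm_sub_le _ _
      _ ≤ 2 * (M * Real.exp (1 + |w.im| + |z.im|) + M * Real.exp (1 + |w.im| + |z.im|)) := by
          gcongr
          · exact (hb z).trans (by gcongr; linarith)
          · exact (hb w).trans (by gcongr; linarith)
      _ = 4 * M * Real.exp (1 + |w.im| + |z.im|) := by ring

theorem norm_dslope_le_div_one_add_norm {g : ℂ → E} {M : ℝ} (hg : Differentiable ℂ g)
    (hb : ∀ z, ‖g z‖ ≤ M * Real.exp |z.im|) (w z : ℂ) :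
    ‖dslope g w z‖ ≤
      4 * M * Real.exp (1 + |w.im|) * (1 + ‖w‖) * Real.exp |z.im| / (1 + ‖z‖) := by
  have hM := nonneg_of_forall_norm_le_mul_exp hb
  refine (norm_dslope_le_of_norm_le_exp hg hb w z).trans ?_
  rw [div_le_div_iff₀ (by positivity) (by positivity), Real.exp_add]
  calc 4 * M * (Real.exp (1 + |w.im|) * Real.exp |z.im|) * (1 + ‖z‖)
      ≤ 4 * M * (Real.exp (1 + |w.im|) * Real.exp |z.im|) * ((1 + ‖w‖) * (1 + ‖z - w‖)) := by
        gcongr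
        exact one_add_norm_le_mul_one_add_norm_sub z w
    _ = _ := by ring

end

/-! ### The sine and cardinal sine functions -/

theorem norm_sin_sq (z : ℂ) :
    ‖Complex.sin z‖ ^ 2 = Real.sin z.re ^ 2 + Real.sinh z.im ^ 2 := by
  have cartesian : ‖Complex.sin z‖ ^ 2 =
      (Real.sin z.re * Real.cosh z.im) ^ 2 + (Real.cos z.re * Real.sinh z.im) ^ 2 := by
    rw [← normSq_eq_norm_sq, sin_eq, ← ofReal_sin, ← ofReal_cos, ← ofReal_sinh, ← ofReal_cosh,
      ← ofReal_mul, ← ofReal_mul, normSq_add_mul_I]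
  rw [cartesian]
  linear_combination Real.sin z.re ^ 2 * Real.cosh_sq z.im +
    Real.sinh z.im ^ 2 * Real.sin_sq_add_cos_sq z.re

theorem norm_sin_le_exp_abs_im (z : ℂ) : ‖Complex.sin z‖ ≤ Real.exp |z.im| := by
  have hcosh : Real.cosh z.im ≤ Real.exp |z.im| := by
    rw [← Real.cosh_abs, Real.cosh_eq]
    have : Real.exp (-|z.im|) ≤ Real.exp |z.im| :=
      Real.exp_le_exp.2 (neg_le_self (abs_nonneg z.im))
    linarith
  refine le_trans ((sq_le_sq₀ (norm_nonneg _) (Real.cosh_pos _).le).1 ?_) hcosh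
  rw [norm_sin_sq, Real.cosh_sq]
  linarith [Real.sin_sq_le_one z.re]

theorem exp_abs_im_div_four_le_norm_sin_of_cos_re_eq_zero {z : ℂ} (hz : Real.cos z.re = 0) :
    Real.exp |z.im| / 4 ≤ ‖Complex.sin z‖ := by
  have hsin : Real.sin z.re ^ 2 = 1 := by
    simpa [hz] using Real.sin_sq_add_cos_sq z.re
  have hnorm : ‖Complex.sin z‖ = Real.cosh z.im := by
    refine (sq_eq_sq₀ (norm_nonneg _) (Real.cosh_pos _).le).1 ?_
    rw [norm_sin_sq, hsin, Real.cosh_sq, add_comm]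
  rw [hnorm, ← Real.cosh_abs, Real.cosh_eq]
  linarith [Real.exp_pos |z.im|, Real.exp_pos (-|z.im|)]

theorem exp_abs_im_div_four_le_norm_sin_of_one_le_abs_im {z : ℂ} (hz : 1 ≤ |z.im|) :
    Real.exp |z.im| / 4 ≤ ‖Complex.sin z‖ := by
  have hexp : 2 ≤ Real.exp |z.im| := by linarith [Real.add_one_le_exp |z.im|]
  have hexp_neg : Real.exp (-|z.im|) ≤ 1 / 2 := by
    rw [Real.exp_neg, one_div]
    gcongr
  have hsinh : |Real.sinh z.im| ≤ ‖Complex.sin z‖ := by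
    refine (sq_le_sq₀ (abs_nonneg _) (norm_nonneg _)).1 ?_
    rw [sq_abs, norm_sin_sq]
    linarith [sq_nonneg (Real.sin z.re)]
  rw [Real.abs_sinh, Real.sinh_eq] at hsinh
  linarith

/-- The entire extension `z ↦ sin z / z` of `Real.sinc`, with value `1` at `0`. -/
noncomputable def complexSinc : ℂ → ℂ := dslope Complex.sin 0

theorem complexSinc_zero : complexSinc 0 = 1 := by
  simp [complexSinc]

theorem complexSinc_of_ne_zero {z : ℂ} (hz : z ≠ 0) : complexSinc z = Complex.sin z / z := by
  rw [complexSinc, dslope_of_ne _ hz, slope_def_field, Complex.sin_zero, sub_zero, sub_zero]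

theorem differentiable_complexSinc : Differentiable ℂ complexSinc :=
  differentiable_dslope differentiable_sin 0

theorem norm_sin_sub_int_mul_pi (z : ℂ) (j : ℤ) :
    ‖Complex.sin (z - j * π)‖ = ‖Complex.sin z‖ := by
  rw [sin_antiperiodic.sub_int_mul_eq j, norm_mul]
  simp

theorem norm_complexSinc_sub_int_mul_pi {z : ℂ} {j : ℤ} (hz : z - j * π ≠ 0) :
    ‖complexSinc (z - j * π)‖ = ‖Complex.sin z‖ / ‖z - j * π‖ := by
  rw [complexSinc_of_ne_zero hz, norm_div, norm_sin_sub_int_mul_pi]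

theorem complexSinc_int_mul_pi_sub {m j : ℤ} (hmj : m ≠ j) :
    complexSinc (m * π - j * π) = 0 := by
  have hne : ((m - j : ℤ) : ℂ) * π ≠ 0 :=
    mul_ne_zero (Int.cast_ne_zero.2 (sub_ne_zero.2 hmj)) (ofReal_ne_zero.2 Real.pi_ne_zero)
  rw [← sub_mul, ← Int.cast_sub, complexSinc_of_ne_zero hne, sin_int_mul_pi, zero_div]

theorem norm_int_mul_pi (j : ℤ) : ‖(j : ℂ) * π‖ = |(j : ℝ)| * π := by
  rw [norm_mul, norm_intCast, norm_real, Real.norm_of_nonneg Real.pi_pos.le]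

theorem abs_intCast_le_norm_int_mul_pi (j : ℤ) : |(j : ℝ)| ≤ ‖(j : ℂ) * π‖ := by
  rw [norm_int_mul_pi]
  exact le_mul_of_one_le_right (abs_nonneg _) (by linarith [Real.pi_gt_three])

theorem im_int_mul_pi (j : ℤ) : ((j : ℂ) * π).im = 0 := by
  simp

theorem norm_complexSinc_sub_int_mul_pi_le (z : ℂ) (j : ℤ) :
    ‖complexSinc (z - j * π)‖ ≤
      4 * Real.exp (1 + |z.im|) * (1 + ‖z‖) * (1 + |(j : ℝ)|)⁻¹ := by
  have hdecay := norm_dslope_le_of_norm_le_exp (M := 1) differentiable_sin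
    (by simpa only [one_mul] using norm_sin_le_exp_abs_im) 0 (z - j * π)
  simp only [sub_im, im_int_mul_pi, zero_im, abs_zero, add_zero, sub_zero, mul_one] at hdecay
  have hpeetre : 1 + |(j : ℝ)| ≤ (1 + ‖z‖) * (1 + ‖z - j * π‖) := by
    have := one_add_norm_le_mul_one_add_norm_sub ((j : ℂ) * π) z
    rw [norm_sub_rev] at this
    linarith [abs_intCast_le_norm_int_mul_pi j]
  refine hdecay.trans ?_
  rw [← div_eq_mul_inv, div_le_div_iff₀ (by positivity) (by positivity), mul_assoc _ (1 + ‖z‖)]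
  gcongr

/-! ### Sampling squares -/

/-- The open square centred at `0` with half-side `(N + 1/2) π`. Its boundary stays away from the
zeros of `sin`, and the zeros inside are the `j π` with `|j| ≤ N`. -/
def samplingSquare (N : ℕ) : Set ℂ :=
  Ioo (-((N + 1 / 2) * π)) ((N + 1 / 2) * π) ×ℂ Ioo (-((N + 1 / 2) * π)) ((N + 1 / 2) * π)

theorem mem_samplingSquare {N : ℕ} {z : ℂ} :
    z ∈ samplingSquare N ↔ |z.re| < (N + 1 / 2) * π ∧ |z.im| < (N + 1 / 2) * π := by
  rw [samplingSquare, mem_reProdIm, mem_Ioo, mem_Ioo, ← abs_lt, ← abs_lt]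

theorem isOpen_samplingSquare (N : ℕ) : IsOpen (samplingSquare N) :=
  isOpen_Ioo.reProdIm isOpen_Ioo

theorem isBounded_samplingSquare (N : ℕ) : Bornology.IsBounded (samplingSquare N) :=
  (Metric.isBounded_Ioo _ _).reProdIm (Metric.isBounded_Ioo _ _)

theorem abs_re_eq_or_abs_im_eq_of_mem_frontier_samplingSquare {N : ℕ} {z : ℂ}
    (hz : z ∈ frontier (samplingSquare N)) :
    |z.re| = (N + 1 / 2) * π ∨ |z.im| = (N + 1 / 2) * π := by
  have hside : (0 : ℝ) < (N + 1 / 2) * π := by positivity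
  have hIoo := neg_lt_self hside
  rw [samplingSquare, frontier_reProdIm, frontier_Ioo hIoo] at hz
  rcases hz with ⟨-, him⟩ | ⟨hre, -⟩
  · exact .inr ((abs_eq hside.le).2 (Or.symm him))
  · exact .inl ((abs_eq hside.le).2 (Or.symm hre))

theorem natCast_add_one_le_half_side (N : ℕ) : (N : ℝ) + 1 ≤ (N + 1 / 2) * π := by
  nlinarith [Real.pi_gt_three, (Nat.cast_nonneg N : (0 : ℝ) ≤ N)]

theorem half_side_le_norm_of_mem_frontier_samplingSquare {N : ℕ} {z : ℂ}
    (hz : z ∈ frontier (samplingSquare N)) : (N + 1 / 2) * π ≤ ‖z‖ := by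
  rcases abs_re_eq_or_abs_im_eq_of_mem_frontier_samplingSquare hz with hre | him
  · exact hre ▸ abs_re_le_norm z
  · exact him ▸ abs_im_le_norm z

theorem exp_abs_im_div_four_le_norm_sin_of_mem_frontier_samplingSquare {N : ℕ} {z : ℂ}
    (hz : z ∈ frontier (samplingSquare N)) : Real.exp |z.im| / 4 ≤ ‖Complex.sin z‖ := by
  rcases abs_re_eq_or_abs_im_eq_of_mem_frontier_samplingSquare hz with hre | him
  · refine exp_abs_im_div_four_le_norm_sin_of_cos_re_eq_zero ?_
    rw [← Real.cos_abs, hre, Real.cos_eq_zero_iff]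
    exact ⟨N, by push_cast; ring⟩
  · refine exp_abs_im_div_four_le_norm_sin_of_one_le_abs_im ?_
    linarith [natCast_add_one_le_half_side N, (Nat.cast_nonneg N : (0 : ℝ) ≤ N)]

theorem sin_ne_zero_of_mem_frontier_samplingSquare {N : ℕ} {z : ℂ}
    (hz : z ∈ frontier (samplingSquare N)) : Complex.sin z ≠ 0 :=
  norm_pos_iff.1 <| (by positivity : 0 < Real.exp |z.im| / 4).trans_le
    (exp_abs_im_div_four_le_norm_sin_of_mem_frontier_samplingSquare hz)

theorem exists_int_mul_pi_of_mem_samplingSquare_of_sin_eq_zero {N : ℕ} {z : ℂ}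
    (hz : z ∈ samplingSquare N) (hsin : Complex.sin z = 0) :
    ∃ m ∈ Finset.Icc (-(N : ℤ)) N, z = m * π := by
  obtain ⟨m, rfl⟩ := sin_eq_zero_iff.1 hsin
  refine ⟨m, Finset.mem_Icc.2 (abs_le.1 (Int.lt_add_one_iff.1 ?_)), rfl⟩
  have hre : |(m : ℝ)| * π < (N + 1 / 2) * π := by
    simpa [abs_mul, abs_of_pos Real.pi_pos] using (mem_samplingSquare.1 hz).1
  have hm : |(m : ℝ)| < N + 1 := by linarith [lt_of_mul_lt_mul_right hre Real.pi_pos.le]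
  exact_mod_cast hm

theorem eventually_mem_samplingSquare (z : ℂ) : ∀ᶠ N : ℕ in atTop, z ∈ samplingSquare N := by
  filter_upwards [(tendsto_natCast_atTop_atTop (R := ℝ)).eventually_gt_atTop ‖z‖] with N hN
  have hside := natCast_add_one_le_half_side N
  exact mem_samplingSquare.2
    ⟨by linarith [abs_re_le_norm z], by linarith [abs_im_le_norm z]⟩

/-! ### The cardinal series -/

section

variable {E : Type*} [NormedAddCommGroup E] [NormedSpace ℂ E]

/-- The truncation to `|j| ≤ N` of the Whittaker cardinal series `∑_j sinc (z - j π) h(j π)`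
interpolating `h` at the points `j π`. -/
noncomputable def cardinalSum (h : ℂ → E) (N : ℕ) (z : ℂ) : E :=
  ∑ j ∈ Finset.Icc (-(N : ℤ)) N, complexSinc (z - j * π) • h (j * π)

theorem differentiable_cardinalSum (h : ℂ → E) (N : ℕ) : Differentiable ℂ (cardinalSum h N) :=
  .fun_sum fun _ _ =>
    (differentiable_complexSinc.comp (differentiable_id.sub_const _)).smul_const _

theorem cardinalSum_int_mul_pi (h : ℂ → E) {N : ℕ} {m : ℤ} (hm : m ∈ Finset.Icc (-(N : ℤ)) N) :
    cardinalSum h N (m * π) = h (m * π) := by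
  rw [cardinalSum, Finset.sum_eq_single_of_mem m hm, sub_self, complexSinc_zero, one_smul]
  intro j _ hjm
  rw [complexSinc_int_mul_pi_sub hjm.symm, zero_smul]

theorem norm_apply_int_mul_pi_le {V : Type*} [SeminormedAddCommGroup V] {h : ℂ → V} {C : ℝ}
    (hb : ∀ z, ‖h z‖ ≤ C * Real.exp |z.im| / (1 + ‖z‖)) (j : ℤ) :
    ‖h (j * π)‖ ≤ C * (1 + |(j : ℝ)|)⁻¹ := by
  have hC : 0 ≤ C := by simpa using (norm_nonneg _).trans (hb 0)
  have hj := hb (j * π)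
  rw [im_int_mul_pi, abs_zero, Real.exp_zero, mul_one, div_eq_mul_inv] at hj
  refine hj.trans ?_
  gcongr
  exact abs_intCast_le_norm_int_mul_pi j

theorem norm_cardinalSum_le_of_mem_frontier {h : ℂ → E} {C : ℝ} {N : ℕ} {z : ℂ}
    (hb : ∀ z, ‖h z‖ ≤ C * Real.exp |z.im| / (1 + ‖z‖)) (hz : z ∈ frontier (samplingSquare N)) :
    ‖cardinalSum h N z‖ ≤ C * boundaryWeight N * ‖Complex.sin z‖ := by
  rw [cardinalSum, boundaryWeight, Finset.mul_sum, Finset.sum_mul]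
  refine norm_sum_le_of_le _ fun j hj => ?_
  have hgap_pos : 0 < (N : ℝ) + 1 - |(j : ℝ)| := by linarith [abs_intCast_le_of_mem_Icc hj]
  have hgap : (N : ℝ) + 1 - |(j : ℝ)| ≤ ‖z - j * π‖ := by
    have hside := half_side_le_norm_of_mem_frontier_samplingSquare hz
    have htriangle := norm_sub_norm_le z (j * π)
    rw [norm_int_mul_pi] at htriangle
    nlinarith [Real.pi_gt_three, abs_intCast_le_of_mem_Icc hj]
  have hne : z - j * π ≠ 0 := norm_pos_iff.1 (hgap_pos.trans_le hgap)
  calc ‖complexSinc (z - j * π) • h (j * π)‖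
      = ‖Complex.sin z‖ / ‖z - j * π‖ * ‖h (j * π)‖ := by
        rw [norm_smul, norm_complexSinc_sub_int_mul_pi hne]
    _ ≤ ‖Complex.sin z‖ / (N + 1 - |(j : ℝ)|) * (C * (1 + |(j : ℝ)|)⁻¹) := by
        gcongr
        exact norm_apply_int_mul_pi_le hb j
    _ = C * ((1 + |(j : ℝ)|) * (N + 1 - |(j : ℝ)|))⁻¹ * ‖Complex.sin z‖ := by
        rw [mul_inv]
        ring

theorem norm_sub_cardinalSum_le_of_mem_frontier {h : ℂ → E} {C : ℝ} {N : ℕ} {z : ℂ}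
    (hb : ∀ z, ‖h z‖ ≤ C * Real.exp |z.im| / (1 + ‖z‖)) (hz : z ∈ frontier (samplingSquare N)) :
    ‖h z - cardinalSum h N z‖ ≤
      C * (4 * (1 / ((N : ℝ) + 1)) + boundaryWeight N) * ‖Complex.sin z‖ := by
  have hC : 0 ≤ C := by simpa using (norm_nonneg _).trans (hb 0)
  have hz_norm : (N : ℝ) + 1 ≤ ‖z‖ :=
    (natCast_add_one_le_half_side N).trans (half_side_le_norm_of_mem_frontier_samplingSquare hz)
  have hsin := exp_abs_im_div_four_le_norm_sin_of_mem_frontier_samplingSquare hz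
  have hh : ‖h z‖ ≤ C * (4 * (1 / ((N : ℝ) + 1))) * ‖Complex.sin z‖ :=
    calc ‖h z‖ ≤ C * Real.exp |z.im| / (1 + ‖z‖) := hb z
      _ ≤ C * Real.exp |z.im| / (N + 1) := by
          gcongr C * Real.exp |z.im| / ?_
          linarith
      _ = C * (4 * (1 / ((N : ℝ) + 1))) * (Real.exp |z.im| / 4) := by ring
      _ ≤ C * (4 * (1 / ((N : ℝ) + 1))) * ‖Complex.sin z‖ := by gcongr
  calc ‖h z - cardinalSum h N z‖ ≤ ‖h z‖ + ‖cardinalSum h N z‖ := norm_sub_le _ _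
    _ ≤ C * (4 * (1 / ((N : ℝ) + 1))) * ‖Complex.sin z‖
          + C * boundaryWeight N * ‖Complex.sin z‖ :=
        add_le_add hh (norm_cardinalSum_le_of_mem_frontier hb hz)
    _ = _ := by ring

variable [CompleteSpace E]

theorem norm_sub_cardinalSum_le {h : ℂ → E} {C : ℝ} {N : ℕ} {z : ℂ} (hh : Differentiable ℂ h)
    (hb : ∀ z, ‖h z‖ ≤ C * Real.exp |z.im| / (1 + ‖z‖)) (hz : z ∈ samplingSquare N) :
    ‖h z - cardinalSum h N z‖ ≤
      C * (4 * (1 / ((N : ℝ) + 1)) + boundaryWeight N) * ‖Complex.sin z‖ := by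
  refine norm_le_mul_norm_of_forall_mem_frontier (s := Complex.sin)
    (f := fun w => h w - cardinalSum h N w) (isOpen_samplingSquare N)
    (isBounded_samplingSquare N) differentiable_sin.diffContOnCl
    (hh.sub (differentiable_cardinalSum h N)).diffContOnCl (fun c hc hsin => ⟨?_, ?_⟩)
    (fun w hw => sin_ne_zero_of_mem_frontier_samplingSquare hw)
    (fun w hw => norm_sub_cardinalSum_le_of_mem_frontier hb hw) hz
  · obtain ⟨m, hm, rfl⟩ := exists_int_mul_pi_of_mem_samplingSquare_of_sin_eq_zero hc hsin
    exact sub_eq_zero.2 (cardinalSum_int_mul_pi h hm).symm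
  · intro hcos
    rw [Complex.deriv_sin] at hcos
    simpa [hsin, hcos] using sin_sq_add_cos_sq c

theorem tendsto_cardinalSum {h : ℂ → E} {C : ℝ} (hh : Differentiable ℂ h)
    (hb : ∀ z, ‖h z‖ ≤ C * Real.exp |z.im| / (1 + ‖z‖)) (z : ℂ) :
    Tendsto (fun N => cardinalSum h N z) atTop (𝓝 (h z)) := by
  have herror : Tendsto (fun N : ℕ => C * (4 * (1 / ((N : ℝ) + 1)) + boundaryWeight N)
      * ‖Complex.sin z‖) atTop (𝓝 0) := by
    simpa using ((((tendsto_one_div_add_atTop_nhds_zero_nat (𝕜 := ℝ)).const_mul 4).add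
      tendsto_boundaryWeight).const_mul C).mul_const ‖Complex.sin z‖
  refine tendsto_iff_norm_sub_tendsto_zero.2 (squeeze_zero' (.of_forall fun N => norm_nonneg _)
    ?_ herror)
  filter_upwards [eventually_mem_samplingSquare z] with N hN
  rw [norm_sub_rev]
  exact norm_sub_cardinalSum_le hh hb hN

theorem summable_complexSinc_smul {h : ℂ → E} {C : ℝ}
    (hb : ∀ z, ‖h z‖ ≤ C * Real.exp |z.im| / (1 + ‖z‖)) (z : ℂ) :
    Summable fun j : ℤ => complexSinc (z - j * π) • h (j * π) := by
  refine ((summable_one_add_abs_int_rpow one_lt_two).mul_left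
    (4 * Real.exp (1 + |z.im|) * (1 + ‖z‖) * C)).of_norm_bounded fun j => ?_
  calc ‖complexSinc (z - j * π) • h (j * π)‖
      ≤ 4 * Real.exp (1 + |z.im|) * (1 + ‖z‖) * (1 + |(j : ℝ)|)⁻¹ * (C * (1 + |(j : ℝ)|)⁻¹) := by
        rw [norm_smul]
        gcongr
        · exact norm_complexSinc_sub_int_mul_pi_le z j
        · exact norm_apply_int_mul_pi_le hb j
    _ = 4 * Real.exp (1 + |z.im|) * (1 + ‖z‖) * C * (1 + |(j : ℝ)|) ^ (-2 : ℝ) := by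
        rw [Real.rpow_neg (by positivity), Real.rpow_two, sq, mul_inv]
        ring

theorem hasSum_complexSinc_smul {h : ℂ → E} {C : ℝ} (hh : Differentiable ℂ h)
    (hb : ∀ z, ‖h z‖ ≤ C * Real.exp |z.im| / (1 + ‖z‖)) (z : ℂ) :
    HasSum (fun j : ℤ => complexSinc (z - j * π) • h (j * π)) (h z) := by
  have hsum := (summable_complexSinc_smul hb z).hasSum
  have hlim := tendsto_nhds_unique (hsum.comp (Finset.tendsto_Icc_neg (R := ℤ)))
    (tendsto_cardinalSum hh hb z)
  rwa [hlim] at hsum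

end

/-! ### Double sampling -/

theorem ofReal_sin_div_eq_complexSinc {x : ℝ} (hx : ∀ n : ℤ, x ≠ π * n) (j : ℤ) :
    ((Real.sin (x - j * π) / (x - j * π) : ℝ) : ℂ) = complexSinc (x - j * π) := by
  have hne : (x : ℂ) - j * π ≠ 0 := by
    refine sub_ne_zero.2 fun h => hx j ?_
    rw [mul_comm]
    exact_mod_cast h
  rw [complexSinc_of_ne_zero hne]
  push_cast
  rfl

theorem ite_deriv_div_eq_dslope {g : ℂ → ℂ} (hg : Differentiable ℂ g) (j k : ℤ) :
    (if j = k then deriv (fun x : ℝ => g x) (j * π)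
      else (g ((j * π : ℝ) : ℂ) - g ((k * π : ℝ) : ℂ)) / ((j * π - k * π : ℝ) : ℂ)) =
    dslope g (j * π) (k * π) := by
  split_ifs with hjk
  · subst hjk
    rw [dslope_same, (hg ((j * π : ℝ) : ℂ)).hasDerivAt.comp_ofReal.deriv]
    push_cast
    rfl
  · have hne : (j : ℂ) * π ≠ k * π := fun h =>
      hjk (by exact_mod_cast mul_right_cancel₀ (ofReal_ne_zero.2 Real.pi_ne_zero) h)
    rw [dslope_eq_sub_div_sub g hne]
    push_cast
    rfl

section

variable {E : Type*} [NormedAddCommGroup E] [NormedSpace ℂ E] [CompleteSpace E]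

theorem norm_dslope_int_mul_pi_le {g : ℂ → E} {M : ℝ} (hg : Differentiable ℂ g)
    (hb : ∀ z, ‖g z‖ ≤ M * Real.exp |z.im|) (j k : ℤ) :
    ‖dslope g (j * π) (k * π)‖ ≤ 4 * M * Real.exp 1 * (1 + |((j - k : ℤ) : ℝ)|)⁻¹ := by
  have hM := nonneg_of_forall_norm_le_mul_exp hb
  have hjk := norm_dslope_le_of_norm_le_exp hg hb (j * π) (k * π)
  rw [im_int_mul_pi, im_int_mul_pi, abs_zero, add_zero, add_zero, norm_sub_rev, ← sub_mul,
    ← Int.cast_sub, div_eq_mul_inv] at hjk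
  refine hjk.trans ?_
  gcongr
  exact abs_intCast_le_norm_int_mul_pi (j - k)

theorem summable_norm_complexSinc_mul_complexSinc_smul_dslope {g : ℂ → E} {M : ℝ}
    (hg : Differentiable ℂ g) (hb : ∀ z, ‖g z‖ ≤ M * Real.exp |z.im|) (z w : ℂ) :
    Summable fun p : ℤ × ℤ =>
      ‖(complexSinc (z - p.1 * π) * complexSinc (w - p.2 * π)) •
        dslope g (p.1 * π) (p.2 * π)‖ := by
  refine .of_nonneg_of_le (fun p => norm_nonneg _) (fun p => ?_)
    (summable_inv_one_add_abs_mul_mul_sub.mul_left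
      (4 * Real.exp (1 + |z.im|) * (1 + ‖z‖) * (4 * Real.exp (1 + |w.im|) * (1 + ‖w‖)) *
        (4 * M * Real.exp 1)))
  rw [norm_smul, norm_mul]
  calc _ ≤ 4 * Real.exp (1 + |z.im|) * (1 + ‖z‖) * (1 + |(p.1 : ℝ)|)⁻¹ *
        (4 * Real.exp (1 + |w.im|) * (1 + ‖w‖) * (1 + |(p.2 : ℝ)|)⁻¹) *
        (4 * M * Real.exp 1 * (1 + |((p.1 - p.2 : ℤ) : ℝ)|)⁻¹) := by
        gcongr
        · exact norm_complexSinc_sub_int_mul_pi_le z p.1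
        · exact norm_complexSinc_sub_int_mul_pi_le w p.2
        · exact norm_dslope_int_mul_pi_le hg hb p.1 p.2
    _ = _ := by ring

theorem hasSum_complexSinc_smul_dslope {g : ℂ → E} {M : ℝ}
    (hg : Differentiable ℂ g) (hb : ∀ z, ‖g z‖ ≤ M * Real.exp |z.im|) (w z : ℂ) :
    HasSum (fun j : ℤ => complexSinc (z - j * π) • dslope g w (j * π)) (dslope g w z) :=
  hasSum_complexSinc_smul (differentiable_dslope hg w) (norm_dslope_le_div_one_add_norm hg hb w) z

theorem divided_difference_double_sampling_general {g : ℂ → E} {M : ℝ}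
    (hg : Differentiable ℂ g) (hb : ∀ z, ‖g z‖ ≤ M * Real.exp |z.im|) (z w : ℂ) :
    (Summable fun p : ℤ × ℤ =>
      ‖(complexSinc (z - p.1 * π) * complexSinc (w - p.2 * π)) •
        dslope g (p.1 * π) (p.2 * π)‖) ∧
    ∑' p : ℤ × ℤ, (complexSinc (z - p.1 * π) * complexSinc (w - p.2 * π)) •
        dslope g (p.1 * π) (p.2 * π) = dslope g z w := by
  have hsummable := summable_norm_complexSinc_mul_complexSinc_smul_dslope hg hb z w
  have hinner : ∀ j : ℤ, HasSum (fun k : ℤ =>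
      (complexSinc (z - j * π) * complexSinc (w - k * π)) • dslope g (j * π) (k * π))
      (complexSinc (z - j * π) • dslope g w (j * π)) := fun j => by
    simpa only [mul_smul, dslope_comm g w] using
      (hasSum_complexSinc_smul_dslope hg hb (j * π) w).const_smul (complexSinc (z - j * π))
  have houter := hasSum_complexSinc_smul_dslope hg hb w z
  refine ⟨hsummable, ?_⟩
  rw [dslope_comm g z]
  exact (hsummable.of_norm.hasSum.prod_fiberwise hinner).unique houter

end

/-- Double sampling representation of the divided difference in the first variable of a
function on `ℝ²` that is the restriction of an entire `F` on `ℂ²` with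
`|F z| ≤ M·exp(‖Im z‖)`: for `x₁ ≠ x₂` with `x₁, x₂ ∉ πℤ`,
`(f(x₁,y) − f(x₂,y))/(x₁ − x₂)
  = Σ_{(j,k)∈ℤ²} (sin(x₁−jπ)/(x₁−jπ))·(sin(x₂−kπ)/(x₂−kπ))·a_{jk}(y)`,
the family being absolutely summable, where `a_{jk}(y)` is the divided difference
`(f(jπ,y) − f(kπ,y))/(jπ − kπ)` for `j ≠ k` and `∂f/∂x(jπ, y)` for `j = k`. -/
theorem divided_difference_double_sampling
    (M : ℝ) (hM : 0 < M)
    (f : ℝ → ℝ → ℂ) (F : ℂ × ℂ → ℂ) (hF : Differentiable ℂ F)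
    (hFbound : ∀ z : ℂ × ℂ, ‖F z‖ ≤ M * Real.exp (Real.sqrt (z.1.im ^ 2 + z.2.im ^ 2)))
    (hfF : ∀ x y : ℝ, f x y = F ((x : ℂ), (y : ℂ)))
    (y x₁ x₂ : ℝ) (hx : x₁ ≠ x₂)
    (h₁ : ∀ n : ℤ, x₁ ≠ Real.pi * n) (h₂ : ∀ n : ℤ, x₂ ≠ Real.pi * n) :
    Summable (fun p : ℤ × ℤ =>
      ‖((Real.sin (x₁ - p.1 * Real.pi) / (x₁ - p.1 * Real.pi) : ℝ) : ℂ) *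
        ((Real.sin (x₂ - p.2 * Real.pi) / (x₂ - p.2 * Real.pi) : ℝ) : ℂ) *
        (if p.1 = p.2 then deriv (fun x : ℝ => f x y) ((p.1 : ℝ) * Real.pi)
          else (f ((p.1 : ℝ) * Real.pi) y - f ((p.2 : ℝ) * Real.pi) y) /
            (((p.1 : ℝ) * Real.pi - (p.2 : ℝ) * Real.pi : ℝ) : ℂ))‖) ∧
    ∑' p : ℤ × ℤ,
        ((Real.sin (x₁ - p.1 * Real.pi) / (x₁ - p.1 * Real.pi) : ℝ) : ℂ) *
          ((Real.sin (x₂ - p.2 * Real.pi) / (x₂ - p.2 * Real.pi) : ℝ) : ℂ) *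
          (if p.1 = p.2 then deriv (fun x : ℝ => f x y) ((p.1 : ℝ) * Real.pi)
            else (f ((p.1 : ℝ) * Real.pi) y - f ((p.2 : ℝ) * Real.pi) y) /
              (((p.1 : ℝ) * Real.pi - (p.2 : ℝ) * Real.pi : ℝ) : ℂ))
      = (f x₁ y - f x₂ y) / ((x₁ : ℂ) - (x₂ : ℂ)) := by
  have hg : Differentiable ℂ fun z => F (z, y) :=
    hF.comp (differentiable_id.prodMk (differentiable_const _))
  have hb : ∀ z : ℂ, ‖F (z, y)‖ ≤ M * Real.exp |z.im| := fun z => by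
    simpa [Real.sqrt_sq_eq_abs] using hFbound (z, y)
  simpa only [ofReal_sin_div_eq_complexSinc h₁, ofReal_sin_div_eq_complexSinc h₂, hfF,
    ite_deriv_div_eq_dslope hg, smul_eq_mul,
    dslope_eq_sub_div_sub _ (Complex.ofReal_injective.ne hx)] using
    divided_difference_double_sampling_general hg hb x₁ x₂
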